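/- arXiv:1406.6210 — 3 statements merged into one kernel-verified Lean document; each statement's English description precedes it below -/
import Mathlib

section
/- Let L be an even integer and let q1, q2 ≥ 2 be integers with q1 + q2 ≤ L − 2; set q3 = L − q1 − q2, suppose q1, q2, q3 are pairwise distinct, and let q_l < q_m < q_u be the increasing rearrangement of q1, q2, q3. Let I = {0, q1, q1 + q2} ⊆ Z_L. If q_u ≥ L/2, then: (i) if q_m = q_l + 1 = (L + 2)/4 and q_u = L/2, then |d⁺(I)| = 8; (ii) otherwise, |d⁺(I)| ≥ 10. -/
open Finset

/-- The set of differences of a codeword `I ⊆ ℤ_L`. -/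
def dset {L : ℕ} (I : Finset (ZMod L)) : Finset (ZMod L) :=
  (I ×ˢ I).image fun p => p.1 - p.2

/-- The set of nonzero differences. -/
def dstar {L : ℕ} (I : Finset (ZMod L)) : Finset (ZMod L) := dset I \ {0}

/-- The set of shifted nonzero differences `d⁺(I) = d*(I) ∪ (d*(I)+1)`. -/
def dplus {L : ℕ} (I : Finset (ZMod L)) : Finset (ZMod L) :=
  dstar I ∪ (dstar I).image (· + 1)

/-!
For `D ⊆ ℤ_L` one has `|D ∪ (D + 1)| = 2 |D| - |{x ∈ D : x + 1 ∈ D}|`. Write `a < b < c` for the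
gaps of the codeword, so that `d*(I) = {±a, ±b, ±c}` is represented by the integers
`a, b, a + b, c, a + c, b + c` in `[2, L - 2]`, and adding `1` causes no wrap-around modulo `L`.
Since `L = a + b + c` is even and `L / 2 ≤ c`, the difference `c - (a + b)` is nonnegative and even.
Hence the list is increasing up to a possible repetition `a + b = c`, and its only possible
consecutive pairs are `(a, b)` and `(a + c, b + c)`, both present exactly when `b = a + 1`. So
`|d⁺(I)|` is `8` if `c = a + b` and `b = a + 1`, it is `10` if exactly one of these equations holds,
and `12` if neither does.
-/

theorem card_union_image_add_right {G : Type*} [Add G] [IsRightCancelAdd G] [DecidableEq G]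
    (S : Finset G) (g : G) :
    #(S ∪ S.image (· + g)) + #{x ∈ S | x + g ∈ S} = 2 * #S := by
  have hinj : Function.Injective (· + g : G → G) := add_left_injective g
  have hinter : S ∩ S.image (· + g) = image (· + g) {x ∈ S | x + g ∈ S} := by
    ext y
    simp only [mem_inter, mem_image, mem_filter]
    grind
  have hcount := card_union_add_card_inter S (S.image (· + g))
  rw [hinter, card_image_of_injective _ hinj, card_image_of_injective _ hinj] at hcount
  rw [hcount, two_mul]

section Codeword

variable {L : ℕ}

theorem dstar_triple {x y z : ZMod L} (hx : x ≠ 0) (hy : y ≠ 0) (hz : z ≠ 0)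
    (hsum : x + y + z = 0) :
    dstar {0, x, x + y} = {x, y, z, -x, -y, -z} := by
  obtain rfl : z = -(x + y) := (neg_eq_of_add_eq_zero_right hsum).symm
  ext d
  simp only [dstar, dset, mem_sdiff, mem_image, mem_product, mem_insert, mem_singleton,
    Prod.exists]
  constructor
  · rintro ⟨⟨s, t, ⟨rfl | rfl | rfl, rfl | rfl | rfl⟩, rfl⟩, hd⟩ <;> simp at hd ⊢
  · rintro (rfl | rfl | rfl | rfl | rfl | rfl)
    · exact ⟨⟨d, 0, by simp⟩, hx⟩
    · exact ⟨⟨x + d, x, by simp⟩, hy⟩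
    · exact ⟨⟨0, x + y, by simp⟩, hz⟩
    · exact ⟨⟨0, x, by simp⟩, neg_ne_zero.mpr hx⟩
    · exact ⟨⟨x, x + y, by simp⟩, neg_ne_zero.mpr hy⟩
    · exact ⟨⟨x + y, 0, by simp⟩, neg_ne_zero.mpr hz⟩

/-- The gaps in `Q` together with their complements in the total length `Q.sum`. For the multiset
`Q` of cyclic gaps of a codeword of weight three, these natural numbers represent its nonzero
differences: `Q.sum - q` stands for `-q`. -/
def gapDifferences (Q : Multiset ℕ) : Finset ℕ :=
  Q.toFinset ∪ Q.toFinset.image (Q.sum - ·)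

theorem image_natCast_gapDifferences {Q : Multiset ℕ} (hQ : Q.sum = L) :
    (gapDifferences Q).image (Nat.cast : ℕ → ZMod L) =
      Q.toFinset.image (Nat.cast : ℕ → ZMod L) ∪ Q.toFinset.image (fun q : ℕ => -(q : ZMod L)) := by
  have hneg : ∀ q ∈ Q.toFinset, ((Q.sum - q : ℕ) : ZMod L) = -(q : ZMod L) := fun q hq => by
    rw [Nat.cast_sub (Multiset.le_sum_of_mem (Multiset.mem_toFinset.mp hq)), hQ,
      ZMod.natCast_self, zero_sub]
  rw [gapDifferences, image_union, image_image]
  exact congrArg _ (image_congr hneg)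

theorem natCast_ne_zero_of_pos_of_lt {n : ℕ} (hpos : 0 < n) (hlt : n < L) : (n : ZMod L) ≠ 0 :=
  fun h => Nat.not_dvd_of_pos_of_lt hpos hlt ((ZMod.natCast_eq_zero_iff n L).mp h)

theorem dstar_codeword {q₁ q₂ q₃ : ℕ} (h₁ : 0 < q₁) (h₂ : 0 < q₂) (h₃ : 0 < q₃)
    (hL : q₁ + q₂ + q₃ = L) :
    dstar {0, (q₁ : ZMod L), ((q₁ + q₂ : ℕ) : ZMod L)} =
      (gapDifferences {q₁, q₂, q₃}).image (Nat.cast : ℕ → ZMod L) := by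
  have hsum : (q₁ + q₂ + q₃ : ZMod L) = 0 := by
    rw [← ZMod.natCast_self L, ← hL]
    push_cast
    rfl
  rw [Nat.cast_add, dstar_triple (natCast_ne_zero_of_pos_of_lt h₁ (by lia))
    (natCast_ne_zero_of_pos_of_lt h₂ (by lia)) (natCast_ne_zero_of_pos_of_lt h₃ (by lia)) hsum,
    image_natCast_gapDifferences (by simp [← hL, add_assoc])]
  ext x
  simp only [Multiset.insert_eq_cons, mem_union, mem_image, Multiset.mem_toFinset,
    Multiset.mem_cons, Multiset.mem_singleton, exists_eq_or_imp, exists_eq_left, mem_insert,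
    mem_singleton, or_assoc, eq_comm (a := x)]

theorem card_dplus_of_dstar_eq_image {I : Finset (ZMod L)} {S : Finset ℕ}
    (hI : dstar I = S.image Nat.cast) (hS : ∀ n ∈ S, n + 1 < L) :
    #(dplus I) = #(S ∪ S.image (· + 1)) := by
  have himage : dplus I = (S ∪ S.image (· + 1)).image Nat.cast := by
    rw [dplus, hI, image_union, image_image, image_image]
    simp [Function.comp_def]
  have hlt : ∀ n ∈ S ∪ S.image (· + 1), n < L := by
    simp only [mem_union, mem_image]
    rintro n (hn | ⟨m, hm, rfl⟩)
    · exact (Nat.lt_succ_self n).trans (hS n hn)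
    · exact hS m hm
  rw [himage, card_image_of_injOn ((CharP.natCast_injOn_Iio (ZMod L) L).mono hlt)]

end Codeword

section LargeGap

variable {a b c : ℕ}

theorem gapDifferences_triple :
    gapDifferences {a, b, c} = {a, b, a + b, c, a + c, b + c} := by
  ext n
  simp only [gapDifferences, Multiset.insert_eq_cons, Multiset.toFinset_cons,
    Multiset.toFinset_singleton, Multiset.sum_cons, Multiset.sum_singleton, image_insert,
    image_singleton, mem_union, mem_insert, mem_singleton]
  lia

theorem card_gapDifferences_triple (ha : 0 < a) (hab : a < b) (hc : a + b ≤ c) :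
    #(gapDifferences {a, b, c}) = if c = a + b then 5 else 6 := by
  rw [gapDifferences_triple]
  split_ifs <;> grind

theorem mem_gapDifferences_and_succ_mem_iff (ha : 2 ≤ a) (hab : a < b) (hc : a + b ≤ c)
    (hne : c ≠ a + b + 1) {n : ℕ} :
    n ∈ gapDifferences {a, b, c} ∧ n + 1 ∈ gapDifferences {a, b, c} ↔
      b = a + 1 ∧ (n = a ∨ n = a + c) := by
  simp only [gapDifferences_triple, mem_insert, mem_singleton]
  omega

theorem card_filter_succ_mem_gapDifferences_triple (ha : 2 ≤ a) (hab : a < b) (hc : a + b ≤ c)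
    (hne : c ≠ a + b + 1) :
    #{n ∈ gapDifferences {a, b, c} | n + 1 ∈ gapDifferences {a, b, c}} =
      if b = a + 1 then 2 else 0 := by
  have hpairs : {n ∈ gapDifferences {a, b, c} | n + 1 ∈ gapDifferences {a, b, c}} =
      if b = a + 1 then {a, a + c} else ∅ := by
    ext n
    rw [mem_filter, mem_gapDifferences_and_succ_mem_iff ha hab hc hne]
    split_ifs with hb <;> simp [hb]
  rw [hpairs, apply_ite card, card_pair (by lia), card_empty]

theorem card_dplus_add_ite {L : ℕ} {I : Finset (ZMod L)}
    (hI : dstar I = (gapDifferences {a, b, c}).image Nat.cast) (hL : a + b + c = L)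
    (ha : 2 ≤ a) (hab : a < b) (hc : a + b ≤ c) (hne : c ≠ a + b + 1) :
    #(dplus I) + (if b = a + 1 then 2 else 0) = 2 * if c = a + b then 5 else 6 := by
  have hlt : ∀ n ∈ gapDifferences {a, b, c}, n + 1 < L := by
    simp only [gapDifferences_triple, mem_insert, mem_singleton]
    lia
  rw [card_dplus_of_dstar_eq_image hI hlt,
    ← card_filter_succ_mem_gapDifferences_triple ha hab hc hne,
    ← card_gapDifferences_triple (by lia) hab hc]
  exact card_union_image_add_right _ 1

end LargeGap

theorem dplus_card_nonequidiff_qu_large (L q1 q2 q3 ql qm qu : ℕ) (hL : Even L)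
    (hq1 : 2 ≤ q1) (hq2 : 2 ≤ q2) (hsum : q1 + q2 ≤ L - 2)
    (hq3 : q3 = L - q1 - q2)
    (hperm : ({q1, q2, q3} : Multiset ℕ) = {ql, qm, qu})
    (hlm : ql < qm) (hmu : qm < qu)
    (I : Finset (ZMod L)) (hI : I = {0, (q1 : ZMod L), ((q1 + q2 : ℕ) : ZMod L)})
    (hqu : L / 2 ≤ qu) :
    (qm = ql + 1 ∧ 4 * qm = L + 2 ∧ 2 * qu = L → (dplus I).card = 8) ∧
    (¬ (qm = ql + 1 ∧ 4 * qm = L + 2 ∧ 2 * qu = L) → 10 ≤ (dplus I).card) := by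
  have hdstar : dstar I = (gapDifferences {ql, qm, qu}).image Nat.cast := by
    rw [hI, dstar_codeword (q₃ := q3) (by lia) (by lia) (by lia) (by lia), hperm]
  have hsum_sorted : ql + qm + qu = L := by
    have := congrArg Multiset.sum hperm
    simp only [Multiset.insert_eq_cons, Multiset.sum_cons, Multiset.sum_singleton] at this
    lia
  have hql : 2 ≤ ql := by
    have : ql ∈ ({q1, q2, q3} : Multiset ℕ) := hperm ▸ by simp
    simp only [Multiset.insert_eq_cons, Multiset.mem_cons, Multiset.mem_singleton] at this
    lia
  obtain ⟨k, rfl⟩ := hL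
  have hle : ql + qm ≤ qu := by lia
  have hne : qu ≠ ql + qm + 1 := by lia
  have hcard := card_dplus_add_ite hdstar hsum_sorted hql hlm hle hne
  split_ifs at hcard <;> lia
end

section
/- Let L be an even integer and let q1, q2 ≥ 2 be integers with q1 + q2 ≤ L − 2; set q3 = L − q1 − q2, suppose q1, q2, q3 are pairwise distinct, and let q_l < q_m < q_u be the increasing rearrangement of q1, q2, q3. Let I = {0, q1, q1 + q2} ⊆ Z_L. If |d⁺(I)| < 10 and d⁺(I) has at least one rough tube, then q_m = q_l + 1 = (L + 2)/4 and q_u = L/2. -/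
open Finset

/-- `d⁺(I)` viewed as a set of natural numbers in `{0,…,L-1}`. -/
def dplusN {L : ℕ} (I : Finset (ZMod L)) : Finset ℕ := (dplus I).image ZMod.val

/-- `T(x,y)` is a tube of `A`: a maximal interval of consecutive integers contained in `A`. -/
def IsTube (A : Finset ℕ) (x y : ℕ) : Prop :=
  x ≤ y ∧ (∀ z ∈ Finset.Icc x y, z ∈ A) ∧ (x - 1) ∉ A ∧ (y + 1) ∉ A

/-!
The nonzero differences of `I` are `±q_l, ±q_m, ±q_u`. A set `D` of integers with `k` adjacent
pairs `n, n + 1 ∈ D` has `2|D| - k` elements in `D ∪ (D + 1)`.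

If `q_u ≠ L/2`, let `a` be the smaller of `q_u` and `L - q_u`. Then the differences are the six
numbers `q_l < q_m < a < L - a < L - q_m < L - q_l`, so `|d⁺(I)| < 10` forces three adjacent pairs.
The middle pair has equal parity, as `L` is even, and the other four adjacencies come in mirror
pairs, so all four occur. The differences then form two runs of length three, mirror images of each
other, and every tube of `d⁺(I)` is flat.

If `q_u = L/2`, there are five differences and at least one adjacent pair. Now `q_l + q_m = q_u`
and `q_l ≥ 2` rule out `q_m + 1 = q_u`, so by symmetry the pair is `q_l, q_m`.
-/

/-- The union of `s` and its translate by one: `d⁺` in terms of `d*`, with residues modulo `L`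
read as natural numbers. -/
def shiftUnion (s : Finset ℕ) : Finset ℕ := s ∪ s.image (· + 1)

/-- The set `s` together with its mirror image under `q ↦ L - q`, that is, the residues in
`{0, …, L - 1}` of `±q` for `q ∈ s`. The subtraction is truncated, so this reading requires
`0 < q < L` for all `q ∈ s`. -/
def reflectUnion (L : ℕ) (s : Finset ℕ) : Finset ℕ := s ∪ s.image (L - ·)

section ShiftUnion

variable {s : Finset ℕ} {x y : ℕ}

lemma mem_shiftUnion : x ∈ shiftUnion s ↔ x ∈ s ∨ ∃ n ∈ s, n + 1 = x := by
  simp only [shiftUnion, mem_union, mem_image]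

lemma card_shiftUnion_add_card_filter (s : Finset ℕ) :
    #(shiftUnion s) + #{n ∈ s | n + 1 ∈ s} = 2 * #s := by
  have hinj : Function.Injective (· + 1 : ℕ → ℕ) := add_left_injective 1
  have hinter : s ∩ s.image (· + 1) = {n ∈ s | n + 1 ∈ s}.image (· + 1) := by
    rw [inter_comm, ← filter_mem_eq_inter, filter_image]
  rw [← card_image_of_injective {n ∈ s | n + 1 ∈ s} hinj, ← hinter, shiftUnion,
    card_union_add_card_inter, card_image_of_injective s hinj, two_mul]

lemma IsTube.left_mem_and_pred_notMem (h : IsTube (shiftUnion s) x y) : x ∈ s ∧ x - 1 ∉ s := by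
  obtain ⟨hxy, hsub, hpred, -⟩ := h
  have hx := hsub x (left_mem_Icc.mpr hxy)
  rw [mem_shiftUnion] at hx hpred
  refine ⟨hx.resolve_right ?_, fun h ↦ hpred (.inl h)⟩
  rintro ⟨n, hn, rfl⟩
  exact hpred (.inl hn)

lemma IsTube.right_notMem_and_pred_mem (h : IsTube (shiftUnion s) x y) :
    y ∉ s ∧ ∃ n ∈ s, n + 1 = y := by
  obtain ⟨hxy, hsub, -, hsucc⟩ := h
  have hy := hsub y (right_mem_Icc.mpr hxy)
  rw [mem_shiftUnion] at hy hsucc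
  have hys : y ∉ s := fun h ↦ hsucc (.inr ⟨y, h, rfl⟩)
  exact ⟨hys, hy.resolve_left hys⟩

end ShiftUnion

section ReflectUnion

variable {L l m a u x y : ℕ} {s : Finset ℕ}

lemma mem_reflectUnion : x ∈ reflectUnion L s ↔ x ∈ s ∨ ∃ q ∈ s, L - q = x := by
  simp only [reflectUnion, mem_union, mem_image]

lemma mem_reflectUnion_triple : x ∈ reflectUnion L {l, m, u} ↔
    (x = l ∨ x = m ∨ x = u) ∨ L - l = x ∨ L - m = x ∨ L - u = x := by
  simp only [mem_reflectUnion, mem_insert, mem_singleton, exists_eq_or_imp, exists_eq_left]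

lemma reflectUnion_insert (L q : ℕ) (s : Finset ℕ) :
    reflectUnion L (insert q s) = insert q (insert (L - q) (reflectUnion L s)) := by
  simp only [reflectUnion, image_insert, insert_union, union_insert, insert_comm (L - q) q]

lemma reflectUnion_insert_sub (h : u ≤ L) (s : Finset ℕ) :
    reflectUnion L (insert (L - u) s) = reflectUnion L (insert u s) := by
  rw [reflectUnion_insert, reflectUnion_insert, Nat.sub_sub_self h, insert_comm]

lemma card_reflectUnion (hs : ∀ q ∈ s, 2 * q < L) : #(reflectUnion L s) = 2 * #s := by
  have hinj : Set.InjOn (L - ·) (s : Set ℕ) := fun p hp q hq hpq ↦ by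
    have := hs p hp
    have := hs q hq
    simp only at hpq
    omega
  have hdisj : Disjoint s (s.image (L - ·)) := disjoint_left.mpr fun p hp hp' ↦ by
    obtain ⟨q, hq, rfl⟩ := mem_image.mp hp'
    have := hs _ hp
    have := hs q hq
    omega
  rw [reflectUnion, card_union_of_disjoint hdisj, card_image_of_injOn hinj, two_mul]

lemma card_reflectUnion_insert_half (hs : ∀ q ∈ s, 2 * q < L) (hu : 2 * u = L) :
    #(reflectUnion L (insert u s)) = 2 * #s + 1 := by
  have hmid : L - u = u := by omega
  have hnotMem : u ∉ reflectUnion L s := by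
    rw [mem_reflectUnion]
    rintro (hu' | ⟨q, hq, hqu⟩)
    · exact (hs u hu').ne hu
    · have := hs q hq
      omega
  rw [reflectUnion_insert, hmid, insert_idem, card_insert_of_notMem hnotMem, card_reflectUnion hs]

lemma consecutive_of_card_shiftUnion_lt_ten (hL : Even L) (hlm : l < m) (hma : m < a)
    (haL : 2 * a < L) (hcard : #(shiftUnion (reflectUnion L {l, m, a})) < 10) :
    m = l + 1 ∧ a = m + 1 := by
  obtain ⟨k, rfl⟩ := hL
  have hcardD : #(reflectUnion (k + k) {l, m, a}) = 6 := by
    rw [card_reflectUnion (by simp only [mem_insert, mem_singleton]; omega),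
      card_eq_three.mpr ⟨l, m, a, by omega, by omega, by omega, rfl⟩]
  have hadj := card_shiftUnion_add_card_filter (reflectUnion (k + k) {l, m, a})
  have hpair (p q : ℕ) : ¬ {n ∈ reflectUnion (k + k) {l, m, a} |
      n + 1 ∈ reflectUnion (k + k) {l, m, a}} ⊆ {p, q} := fun hsub ↦ by
    have := (card_le_card hsub).trans card_le_two
    omega
  constructor <;> by_contra hne
  · refine hpair m (k + k - a) fun n ↦ ?_
    simp only [mem_filter, mem_reflectUnion_triple, mem_insert, mem_singleton]
    omega
  · refine hpair l (k + k - m) fun n ↦ ?_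
    simp only [mem_filter, mem_reflectUnion_triple, mem_insert, mem_singleton]
    omega

lemma eq_succ_of_card_shiftUnion_lt_ten (hlm : l < m) (hmu : m + 1 < u) (hu : 2 * u = L)
    (hcard : #(shiftUnion (reflectUnion L {l, m, u})) < 10) : m = l + 1 := by
  have hcardD : #(reflectUnion L {l, m, u}) = 5 := by
    rw [pair_comm m u, insert_comm l u, card_reflectUnion_insert_half
      (by simp only [mem_insert, mem_singleton]; omega) hu, card_pair hlm.ne]
  by_contra hne
  have hadj : {n ∈ reflectUnion L {l, m, u} | n + 1 ∈ reflectUnion L {l, m, u}} = ∅ :=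
    filter_eq_empty_iff.mpr fun n ↦ by
      simp only [mem_reflectUnion_triple]
      omega
  have := card_shiftUnion_add_card_filter (reflectUnion L {l, m, u})
  rw [hadj, card_empty] at this
  omega

lemma odd_add_of_isTube_consecutive (hL : Even L) (hl : l + 2 ≤ L)
    (h : IsTube (shiftUnion (reflectUnion L {l, l + 1, l + 2})) x y) : Odd (x + y) := by
  have hleft := h.left_mem_and_pred_notMem
  have hright := h.right_notMem_and_pred_mem
  simp only [mem_reflectUnion_triple] at hleft hright
  have hx : x = l ∨ x + (l + 2) = L := by omega
  have hy : y = l + 3 ∨ y + l = L + 1 := by omega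
  obtain ⟨k, rfl⟩ := hL
  rw [Nat.odd_iff]
  omega

end ReflectUnion

section Codeword

open scoped Pointwise

variable {L : ℕ}

lemma dplusN_eq_shiftUnion {I : Finset (ZMod L)} (h : ∀ z ∈ dstar I, z.val + 1 < L) :
    dplusN I = shiftUnion ((dstar I).image ZMod.val) := by
  have hsucc : ∀ z ∈ dstar I, (z + 1).val = z.val + 1 := fun z hz ↦ by
    have hone : (1 : ZMod L).val = 1 := ZMod.val_one'' (by have := h z hz; omega)
    rw [ZMod.val_add_of_lt (by rw [hone]; exact h z hz), hone]
  rw [dplusN, dplus, shiftUnion, image_union, image_image, image_image]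
  exact congrArg _ (image_congr hsucc)

lemma dstar_zero_add {x y z : ZMod L} (hsum : x + y + z = 0) (hx : x ≠ 0) (hy : y ≠ 0)
    (hz : z ≠ 0) : dstar {0, x, x + y} = {x, y, z} ∪ -{x, y, z} := by
  obtain rfl : z = -(x + y) := (neg_eq_of_add_eq_zero_right hsum).symm
  ext w
  rw [dstar, dset, image_sub_product]
  simp only [mem_sdiff, mem_sub, mem_union, neg_insert, neg_singleton, mem_insert, mem_singleton,
    exists_eq_or_imp, exists_eq_left]
  grind

lemma image_val_union_neg {s : Finset ℕ} (hs : ∀ q ∈ s, 0 < q ∧ q < L) :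
    (s.image (Nat.cast : ℕ → ZMod L) ∪ -s.image Nat.cast).image ZMod.val = reflectUnion L s := by
  have hval : ∀ q ∈ s, (q : ZMod L).val = q := fun q hq ↦ ZMod.val_cast_of_lt (hs q hq).2
  have hneg : ∀ q ∈ s, (-(q : ZMod L)).val = L - q := fun q hq ↦ by
    rw [← ZMod.val_cast_of_lt (n := L) (a := L - q) (by have := hs q hq; omega),
      Nat.cast_sub (hs q hq).2.le, ZMod.natCast_self, zero_sub]
  rw [reflectUnion, image_union, ← image_neg_eq_neg]
  simp only [image_image]
  congr 1
  · exact (image_congr hval).trans image_id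
  · exact image_congr hneg

lemma dplusN_eq_shiftUnion_reflectUnion {q1 q2 q3 : ℕ} (h1 : 2 ≤ q1) (h2 : 2 ≤ q2) (h3 : 2 ≤ q3)
    (hsum : q1 + q2 + q3 = L) :
    dplusN ({0, (q1 : ZMod L), ((q1 + q2 : ℕ) : ZMod L)} : Finset (ZMod L)) =
      shiftUnion (reflectUnion L {q1, q2, q3}) := by
  have hgaps : ∀ q ∈ ({q1, q2, q3} : Finset ℕ), 0 < q ∧ q < L := by
    simp only [mem_insert, mem_singleton]
    omega
  have hne : ∀ q ∈ ({q1, q2, q3} : Finset ℕ), (q : ZMod L) ≠ 0 := fun q hq h ↦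
    (Nat.le_of_dvd (hgaps q hq).1 ((ZMod.natCast_eq_zero_iff q L).mp h)).not_gt (hgaps q hq).2
  have hzero : (q1 : ZMod L) + q2 + q3 = 0 := by
    rw [← ZMod.natCast_self L, ← hsum]
    push_cast
    rfl
  have hdstar : (dstar ({0, (q1 : ZMod L), ((q1 + q2 : ℕ) : ZMod L)} : Finset (ZMod L))).image
      ZMod.val = reflectUnion L {q1, q2, q3} := by
    rw [Nat.cast_add, dstar_zero_add hzero (hne q1 (by simp)) (hne q2 (by simp))
      (hne q3 (by simp)), ← image_val_union_neg hgaps]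
    simp only [image_insert, image_singleton]
  rw [dplusN_eq_shiftUnion, hdstar]
  intro z hz
  have hval := hdstar ▸ mem_image_of_mem ZMod.val hz
  rw [mem_reflectUnion_triple] at hval
  omega

end Codeword

lemma eq_succ_and_two_mul_eq_of_rough_tube {L l m u x y : ℕ} (hL : Even L) (hl : 2 ≤ l)
    (hlm : l < m) (hmu : m < u) (hsum : l + m + u = L)
    (hcard : #(shiftUnion (reflectUnion L {l, m, u})) < 10)
    (htube : IsTube (shiftUnion (reflectUnion L {l, m, u})) x y) (hrough : Even (x + y)) :
    m = l + 1 ∧ 2 * u = L := by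
  have hhalf : 2 * u = L := by
    by_contra hne
    obtain ⟨a, hma, haL, ha⟩ : ∃ a, m < a ∧ 2 * a < L ∧
        reflectUnion L {l, m, u} = reflectUnion L {l, m, a} := by
      rcases lt_or_gt_of_ne hne with hlt | hgt
      · exact ⟨u, hmu, hlt, rfl⟩
      · refine ⟨L - u, by omega, by omega, ?_⟩
        rw [pair_comm m, insert_comm l, pair_comm m, insert_comm l,
          reflectUnion_insert_sub (by omega)]
    rw [ha] at hcard htube
    obtain ⟨rfl, rfl⟩ := consecutive_of_card_shiftUnion_lt_ten hL hlm hma haL hcard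
    exact Nat.not_even_iff_odd.mpr
      (odd_add_of_isTube_consecutive hL (by omega) htube) hrough
  exact ⟨eq_succ_of_card_shiftUnion_lt_ten hlm (by omega) hhalf hcard, hhalf⟩

theorem nonequidiff_rough_tube (L q1 q2 q3 ql qm qu : ℕ) (hL : Even L)
    (hq1 : 2 ≤ q1) (hq2 : 2 ≤ q2) (hsum : q1 + q2 ≤ L - 2)
    (hq3 : q3 = L - q1 - q2)
    (hperm : ({q1, q2, q3} : Multiset ℕ) = {ql, qm, qu})
    (hlm : ql < qm) (hmu : qm < qu)
    (I : Finset (ZMod L)) (hI : I = {0, (q1 : ZMod L), ((q1 + q2 : ℕ) : ZMod L)})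
    (hcard : (dplus I).card < 10)
    (htube : ∃ x y, IsTube (dplusN I) x y ∧ ((Even x ∧ Even y) ∨ (Odd x ∧ Odd y))) :
    qm = ql + 1 ∧ 4 * qm = L + 2 ∧ 2 * qu = L := by
  have hset : ({q1, q2, q3} : Finset ℕ) = {ql, qm, qu} := by
    simpa using congrArg Multiset.toFinset hperm
  have hsums : q1 + (q2 + q3) = ql + (qm + qu) := by simpa using congrArg Multiset.sum hperm
  have hqL : q1 + q2 + q3 = L := by omega
  have hql : ql ∈ ({q1, q2, q3} : Finset ℕ) := by simp [hset]
  have hql2 : 2 ≤ ql := by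
    simp only [mem_insert, mem_singleton] at hql
    omega
  have hdplusN : dplusN I = shiftUnion (reflectUnion L {ql, qm, qu}) := by
    rw [hI, dplusN_eq_shiftUnion_reflectUnion hq1 hq2 (by omega) hqL, hset]
  obtain ⟨x, y, htube, hrough⟩ := htube
  have hparity : Even (x + y) := hrough.elim (fun h ↦ h.1.add h.2) (fun h ↦ h.1.add_odd h.2)
  obtain ⟨hm, hu⟩ := eq_succ_and_two_mul_eq_of_rough_tube hL hql2 hlm hmu (by omega)
    (hdplusN ▸ card_image_le.trans_lt hcard) (hdplusN ▸ htube) hparity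
  omega
end

section
/- For every integer L ≥ 18 with L ≡ 12 (mod 24), M_S(L,3) ≤ (L − 4)/8. -/
open Finset

/-- A strongly conflict-avoiding code of length `L` and weight `ω`. -/
def IsSCAC (L ω : ℕ) (C : Finset (Finset (ZMod L))) : Prop :=
  (∀ I ∈ C, I.card = ω) ∧
  (∀ I ∈ C, (1 : ZMod L) ∉ dstar I ∧ (-1 : ZMod L) ∉ dstar I) ∧
  ∀ I ∈ C, ∀ J ∈ C, I ≠ J → Disjoint (dplus I) (dplus J)

/-- `M_S(L,ω)`: the maximum size of an SCAC of length `L` and weight `ω`. -/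
noncomputable def MS (L ω : ℕ) : ℕ :=
  sSup {n | ∃ C : Finset (Finset (ZMod L)), IsSCAC L ω C ∧ C.card = n}

/-!
Fix `12 ∣ L` and a code of weight three. Charge every codeword `I` with `|d⁺(I)|`, plus `4` if
`L/3 ∈ d*(I)`, plus `2` if `L/4 ∈ d*(I)`. The set `d⁺(I)` is invariant under `x ↦ 1 - x`, and
exhibiting enough orbits of this reflection shows that every charge is at least `8`, and at least
`9` when `d*(I)` contains two consecutive residues. The sets `d⁺(I)` are disjoint and avoid `0` and
`1`, so the total charge is at most `(L - 2) + 4 + 2`, giving `8 |C| ≤ L + 4`.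

If equality holds, the sets `d⁺(I)` cover everything except `0` and `1`, no two differences of the
code are consecutive, and `L/4` is a difference. The first two facts force the differences of the
code to be `2, 4, 6, …`, so `L/4` is even, which fails for `L ≡ 12 (mod 24)`.
-/

section Residues

variable {L d : ℕ}

theorem natCast_mul_ne_natCast {e : ℕ} (hd : d ∣ L) (he : ¬d ∣ e) (x : ZMod L) :
    (d : ZMod L) * x ≠ e := by
  intro h
  have h_mod : (0 : ZMod d) = e := by
    simpa only [map_mul, map_natCast, ZMod.natCast_self, zero_mul]
      using congrArg (ZMod.castHom hd (ZMod d)) h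
  exact he ((ZMod.natCast_eq_zero_iff e d).1 h_mod.symm)

theorem two_mul_ne_one (h2 : 2 ∣ L) (x : ZMod L) : 2 * x ≠ 1 := by
  exact_mod_cast natCast_mul_ne_natCast (e := 1) h2 (by norm_num) x

theorem three_mul_ne_one (h3 : 3 ∣ L) (x : ZMod L) : 3 * x ≠ 1 := by
  exact_mod_cast natCast_mul_ne_natCast (e := 1) h3 (by norm_num) x

theorem three_mul_ne_two (h3 : 3 ∣ L) (x : ZMod L) : 3 * x ≠ 2 := by
  exact_mod_cast natCast_mul_ne_natCast (e := 2) h3 (by norm_num) x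

theorem four_mul_ne_two (h4 : 4 ∣ L) (x : ZMod L) : 4 * x ≠ 2 := by
  exact_mod_cast natCast_mul_ne_natCast (e := 2) h4 (by norm_num) x

theorem natCast_mul_natCast_div_eq_zero (hd : d ∣ L) : (d : ZMod L) * (L / d : ℕ) = 0 := by
  rw [← Nat.cast_mul, Nat.mul_div_cancel' hd, ZMod.natCast_self]

theorem exists_eq_mul_div_of_natCast_mul_eq_zero [NeZero L] (hd : d ∣ L) {x : ZMod L}
    (hx : (d : ZMod L) * x = 0) : ∃ j < d, x = j * (L / d : ℕ) := by
  obtain ⟨m, rfl⟩ := hd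
  have hd_pos : 0 < d := Nat.pos_of_mul_pos_right (NeZero.pos (d * m))
  have h_dvd : d * m ∣ d * x.val := by
    rw [← ZMod.natCast_eq_zero_iff, Nat.cast_mul, ZMod.natCast_zmod_val, hx]
  obtain ⟨j, hj⟩ := Nat.dvd_of_mul_dvd_mul_left hd_pos h_dvd
  refine ⟨j, ?_, ?_⟩
  · have h_lt : m * j < m * d := by
      rw [← hj, mul_comm m d]
      exact x.val_lt
    exact lt_of_mul_lt_mul_left h_lt (Nat.zero_le m)
  · rw [Nat.mul_div_cancel_left m hd_pos, ← Nat.cast_mul, mul_comm j, ← hj,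
      ZMod.natCast_zmod_val]

variable [NeZero L] {x y : ZMod L}

theorem card_compl_zero_one (hL : 1 < L) : #({0, 1}ᶜ : Finset (ZMod L)) = L - 2 := by
  have : Fact (1 < L) := ⟨hL⟩
  rw [card_compl, ZMod.card, card_pair zero_ne_one]

theorem eq_of_two_mul_eq_zero (h2 : 2 ∣ L) (hx : 2 * x = 0) (hy : 2 * y = 0) (hx0 : x ≠ 0)
    (hy0 : y ≠ 0) : x = y := by
  have eq_half : ∀ z : ZMod L, 2 * z = 0 → z ≠ 0 → z = (L / 2 : ℕ) := by
    intro z hz hz0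
    obtain ⟨j, hj, rfl⟩ := exists_eq_mul_div_of_natCast_mul_eq_zero h2 (by exact_mod_cast hz)
    interval_cases j <;> simp_all
  rw [eq_half x hx hx0, eq_half y hy hy0]

theorem eq_or_neg_eq_of_three_mul_eq_zero (h3 : 3 ∣ L) (hx : 3 * x = 0) (hx0 : x ≠ 0) :
    (L / 3 : ℕ) = x ∨ (L / 3 : ℕ) = -x := by
  have h_third := natCast_mul_natCast_div_eq_zero h3
  obtain ⟨j, hj, rfl⟩ := exists_eq_mul_div_of_natCast_mul_eq_zero h3 (by exact_mod_cast hx)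
  interval_cases j
  · simp at hx0
  · exact .inl (by simp)
  · exact .inr (by push_cast at h_third ⊢; linear_combination h_third)

theorem eq_or_neg_eq_of_four_mul_eq_zero (h4 : 4 ∣ L) (hx : 4 * x = 0) (hx2 : 2 * x ≠ 0) :
    (L / 4 : ℕ) = x ∨ (L / 4 : ℕ) = -x := by
  have h_quarter := natCast_mul_natCast_div_eq_zero h4
  obtain ⟨j, hj, rfl⟩ := exists_eq_mul_div_of_natCast_mul_eq_zero h4 (by exact_mod_cast hx)
  interval_cases j
  · simp at hx2
  · exact .inl (by simp)
  · exact absurd (by push_cast at h_quarter ⊢; linear_combination h_quarter) hx2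
  · exact .inr (by push_cast at h_quarter ⊢; linear_combination h_quarter)

end Residues

section Differences

variable {L : ℕ} {I U : Finset (ZMod L)} {x y a : ZMod L}

theorem mem_dstar : x ∈ dstar I ↔ (∃ u ∈ I, ∃ v ∈ I, u - v = x) ∧ x ≠ 0 := by
  simp only [dstar, dset, mem_sdiff, mem_image, mem_product, mem_singleton, Prod.exists]
  grind

theorem sub_mem_dstar (hx : x ∈ I) (hy : y ∈ I) (hxy : x ≠ y) : x - y ∈ dstar I :=
  mem_dstar.2 ⟨⟨x, hx, y, hy, rfl⟩, sub_ne_zero.2 hxy⟩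

theorem ne_zero_of_mem_dstar (hx : x ∈ dstar I) : x ≠ 0 := (mem_dstar.1 hx).2

theorem neg_mem_dstar (hx : x ∈ dstar I) : -x ∈ dstar I := by
  obtain ⟨⟨u, hu, v, hv, rfl⟩, h0⟩ := mem_dstar.1 hx
  rw [neg_sub]
  exact sub_mem_dstar hv hu (sub_ne_zero.1 h0).symm

theorem ne_neg_one_of_mem_dstar (h1 : 1 ∉ dstar I) (ha : a ∈ dstar I) : a ≠ -1 := by
  rintro rfl
  exact h1 (by simpa using neg_mem_dstar ha)

theorem mem_dplus : x ∈ dplus I ↔ x ∈ dstar I ∨ x - 1 ∈ dstar I := by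
  simp only [dplus, mem_union, mem_image, ← eq_sub_iff_add_eq, exists_eq_right]

theorem dstar_subset_dplus : dstar I ⊆ dplus I := subset_union_left

theorem add_one_mem_dplus (hx : x ∈ dstar I) : x + 1 ∈ dplus I :=
  mem_dplus.2 (.inr (by rwa [add_sub_cancel_right]))

theorem one_sub_mem_dplus (hx : x ∈ dplus I) : 1 - x ∈ dplus I := by
  rcases mem_dplus.1 hx with h | h
  · rw [sub_eq_neg_add]
    exact add_one_mem_dplus (neg_mem_dstar h)
  · rw [← neg_sub]
    exact dstar_subset_dplus (neg_mem_dstar h)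

theorem two_mul_card_le_card_dplus (hU : U ⊆ dplus I) (h_refl : ∀ x ∈ U, 1 - x ∉ U) :
    2 * #U ≤ #(dplus I) := by
  have h_disj : Disjoint U (U.image (1 - ·)) := by
    simp only [disjoint_right, forall_mem_image]
    exact h_refl
  calc 2 * #U = #(U ∪ U.image (1 - ·)) := by
        rw [card_union_of_disjoint h_disj, card_image_of_injective _ sub_right_injective, two_mul]
    _ ≤ #(dplus I) := card_le_card (union_subset hU (image_subset_iff.2 fun x hx =>
        one_sub_mem_dplus (hU hx)))

theorem dplus_subset_compl_zero_one [NeZero L] (h1 : 1 ∉ dstar I) : dplus I ⊆ {0, 1}ᶜ := by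
  intro x hx
  rw [mem_compl, mem_insert, mem_singleton]
  rintro (rfl | rfl)
  · rcases mem_dplus.1 hx with h | h
    · exact ne_zero_of_mem_dstar h rfl
    · exact ne_neg_one_of_mem_dstar h1 h (zero_sub 1)
  · rcases mem_dplus.1 hx with h | h
    · exact h1 h
    · exact ne_zero_of_mem_dstar h (sub_self 1)

theorem natCast_div_three_mem_dstar [NeZero L] (h3 : 3 ∣ L) (hx : x ∈ dstar I)
    (hx3 : 3 * x = 0) : ((L / 3 : ℕ) : ZMod L) ∈ dstar I := by
  rcases eq_or_neg_eq_of_three_mul_eq_zero h3 hx3 (ne_zero_of_mem_dstar hx) with h | h <;> rw [h]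
  exacts [hx, neg_mem_dstar hx]

theorem natCast_div_four_mem_dstar [NeZero L] (h4 : 4 ∣ L) (hx : x ∈ dstar I)
    (hx4 : 4 * x = 0) (hx2 : 2 * x ≠ 0) : ((L / 4 : ℕ) : ZMod L) ∈ dstar I := by
  rcases eq_or_neg_eq_of_four_mul_eq_zero h4 hx4 hx2 with h | h <;> rw [h]
  exacts [hx, neg_mem_dstar hx]

theorem exists_add_mem_dstar_of_card_eq_three [NeZero L] (h2 : 2 ∣ L) (hI : #I = 3) :
    ∃ a ∈ dstar I, ∃ b ∈ dstar I, a + b ∈ dstar I ∧ 2 * a ≠ 0 ∧ 2 * b ≠ 0 := by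
  obtain ⟨x, y, z, hxy, hxz, hyz, rfl⟩ := card_eq_three.1 hI
  have not_both_involutions : ∀ {u v w : ZMod L}, u ≠ v → v ≠ w → u ≠ w →
      2 * (u - v) = 0 → 2 * (v - w) ≠ 0 := by
    intro u v w huv hvw huw h h'
    have h_eq := eq_of_two_mul_eq_zero h2 h h' (sub_ne_zero.2 huv) (sub_ne_zero.2 hvw)
    exact huw (by linear_combination h - h_eq)
  have of_path : ∀ {u v w : ZMod L}, {u, v, w} = ({x, y, z} : Finset (ZMod L)) →
      u ≠ v → v ≠ w → u ≠ w → 2 * (u - v) ≠ 0 → 2 * (v - w) ≠ 0 →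
      ∃ a ∈ dstar {x, y, z}, ∃ b ∈ dstar {x, y, z},
        a + b ∈ dstar {x, y, z} ∧ 2 * a ≠ 0 ∧ 2 * b ≠ 0 := by
    intro u v w h huv hvw huw huv2 hvw2
    rw [← h]
    exact ⟨u - v, sub_mem_dstar (by simp) (by simp) huv, v - w,
      sub_mem_dstar (by simp) (by simp) hvw, by
        rw [sub_add_sub_cancel]
        exact sub_mem_dstar (by simp) (by simp) huw, huv2, hvw2⟩
  by_cases h_xy : 2 * (x - y) = 0
  · exact of_path (by grind) hyz hxz.symm hxy.symm
      (not_both_involutions hxy hyz hxz h_xy) fun h =>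
        not_both_involutions hxz.symm hxy hyz.symm h h_xy
  by_cases h_yz : 2 * (y - z) = 0
  · exact of_path (by grind) hxz.symm hxy hyz.symm
      (not_both_involutions hyz hxz.symm hxy.symm h_yz) h_xy
  · exact of_path rfl hxy hyz hxz h_xy h_yz

theorem two_mul_add_one_mem_dstar (h2 : 2 ∣ L) (hI : #I = 3) (h1 : 1 ∉ dstar I)
    (ha : a ∈ dstar I) (ha' : a + 1 ∈ dstar I) : 2 * a + 1 ∈ dstar I := by
  have h_two := two_mul_ne_one h2
  obtain ⟨⟨u, hu, v, hv, rfl⟩, huv⟩ := mem_dstar.1 ha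
  obtain ⟨⟨s, hs, t, ht, hst⟩, hst0⟩ := mem_dstar.1 ha'
  have sub_ne_one : ∀ x ∈ I, ∀ y ∈ I, x - y ≠ 1 := by
    intro x hx y hy h
    refine h1 (h ▸ sub_mem_dstar hx hy ?_)
    rintro rfl
    exact h_two 0 (by simpa using h)
  have hsu : s ≠ u := fun h => sub_ne_one v hv t ht (by linear_combination hst - h)
  have htv : t ≠ v := fun h => sub_ne_one s hs u hu (by linear_combination hst + h)
  by_cases hsv : s = v
  · have htu : t ≠ u := fun h => h_two (v - u) (by linear_combination hst + h - hsv)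
    rw [show 2 * (u - v) + 1 = u - t by linear_combination hsv - hst]
    exact sub_mem_dstar hu ht htu.symm
  by_cases htu : t = u
  · rw [show 2 * (u - v) + 1 = s - v by linear_combination -hst - htu]
    exact sub_mem_dstar hs hv hsv
  have h_four : #{u, v, s, t} = 4 := by grind
  have h_sub : {u, v, s, t} ⊆ I := by grind
  have := card_le_card h_sub
  omega

end Differences

section Charge

variable {L : ℕ} {I : Finset (ZMod L)} {a b : ZMod L}

/-- The charge of a codeword `I`: the size of `d⁺(I)`, topped up by `4` and `2` when `d*(I)`
contains `L/3` and `L/4`, respectively, the two residues that allow a codeword of weight three to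
have `|d⁺(I)| < 8`. It is meant for `12 ∣ L`, where the natural number divisions are exact. -/
def charge (I : Finset (ZMod L)) : ℕ :=
  #(dplus I) + (if ((L / 3 : ℕ) : ZMod L) ∈ dstar I then 4 else 0) +
    (if ((L / 4 : ℕ) : ZMod L) ∈ dstar I then 2 else 0)

/-- No two cyclically consecutive residues lie in `S`. For `S = d*(I)` this says that `d*(I)` and
its shift by one are disjoint, so that `|d⁺(I)| = 2 |d*(I)|`. -/
def NoConsecutive (S : Finset (ZMod L)) : Prop := ∀ x ∈ S, x + 1 ∉ S

theorem NoConsecutive.two_mul_card_le_of_subset_dstar (hI : NoConsecutive (dstar I))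
    {U : Finset (ZMod L)} (hU : U ⊆ dstar I) : 2 * #U ≤ #(dplus I) := by
  refine two_mul_card_le_card_dplus (hU.trans dstar_subset_dplus) fun x hx hx' => ?_
  refine hI (-x) (neg_mem_dstar (hU hx)) ?_
  rw [← sub_eq_neg_add]
  exact hU hx'

theorem NoConsecutive.eight_le_card_dplus (hI : NoConsecutive (dstar I)) (ha : a ∈ dstar I)
    (hb : b ∈ dstar I) (ha2 : 2 * a ≠ 0) (hb2 : 2 * b ≠ 0) (h_ne : a ≠ b) (h_add : a + b ≠ 0) :
    8 ≤ #(dplus I) := by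
  have h_card : #{a, -a, b, -b} = 4 := by grind
  have h_le := hI.two_mul_card_le_of_subset_dstar (U := {a, -a, b, -b}) (by
    simp only [insert_subset_iff, singleton_subset_iff]
    exact ⟨ha, neg_mem_dstar ha, hb, neg_mem_dstar hb⟩)
  omega

theorem six_le_card_dplus_of_consecutive (h2 : 2 ∣ L) (h1 : 1 ∉ dstar I) (ha : a ∈ dstar I)
    (ha' : a + 1 ∈ dstar I) (hc : 2 * a + 1 ∈ dstar I) : 6 ≤ #(dplus I) := by
  have h_two_ne_one := two_mul_ne_one h2 (-a)
  have hc_ne := ne_neg_one_of_mem_dstar h1 hc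
  set U : Finset (ZMod L) := {a, a + 1, a + 1 + 1} with hU
  have h_sub : U ⊆ dplus I := by
    simp only [hU, insert_subset_iff, singleton_subset_iff]
    exact ⟨dstar_subset_dplus ha, dstar_subset_dplus ha', add_one_mem_dplus ha'⟩
  have h_refl : ∀ x ∈ U, 1 - x ∉ U := by
    intro x
    have hx := two_mul_ne_one h2 x
    simp only [hU, mem_insert, mem_singleton]
    grind
  have h_card : #U = 3 := by grind
  have h_le := two_mul_card_le_card_dplus h_sub h_refl
  omega

theorem ten_le_card_dplus_of_consecutive (h3 : 3 ∣ L) (h4 : 4 ∣ L) (h1 : 1 ∉ dstar I)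
    (ha : a ∈ dstar I) (ha' : a + 1 ∈ dstar I) (hc : 2 * a + 1 ∈ dstar I) (h3a : 3 * a ≠ 0)
    (h3a' : 3 * (a + 1) ≠ 0) : 10 ≤ #(dplus I) := by
  have h2 : 2 ∣ L := dvd_trans (by norm_num) h4
  have h_three_ne_one := three_mul_ne_one h3 (-a)
  have h_three_ne_two := three_mul_ne_two h3 (-a)
  have h_four_ne_two := four_mul_ne_two h4 (-a)
  have ha'_ne := ne_neg_one_of_mem_dstar h1 ha'
  have hc_ne := ne_neg_one_of_mem_dstar h1 hc
  set U : Finset (ZMod L) := {a, a + 1, a + 1 + 1, 2 * a + 1, 2 * a + 1 + 1} with hU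
  have h_sub : U ⊆ dplus I := by
    simp only [hU, insert_subset_iff, singleton_subset_iff]
    exact ⟨dstar_subset_dplus ha, dstar_subset_dplus ha', add_one_mem_dplus ha',
      dstar_subset_dplus hc, add_one_mem_dplus hc⟩
  have h_refl : ∀ x ∈ U, 1 - x ∉ U := by
    intro x
    have hx := two_mul_ne_one h2 x
    simp only [hU, mem_insert, mem_singleton]
    grind
  have h_card : #U = 5 := by grind
  have h_le := two_mul_card_le_card_dplus h_sub h_refl
  omega

variable [NeZero L]

theorem NoConsecutive.eight_le_charge_of_two_mul_mem (hL : 12 ∣ L) (hI : NoConsecutive (dstar I))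
    (ha : a ∈ dstar I) (ha2 : 2 * a ∈ dstar I) : 8 ≤ charge I := by
  have ha2_ne := ne_zero_of_mem_dstar ha2
  unfold charge
  by_cases h3 : 3 * a = 0
  · have h_card : #{a, -a} = 2 := by grind
    have h_le := hI.two_mul_card_le_of_subset_dstar (U := {a, -a}) (by
      simp only [insert_subset_iff, singleton_subset_iff]
      exact ⟨ha, neg_mem_dstar ha⟩)
    rw [if_pos (natCast_div_three_mem_dstar (dvd_trans (by norm_num) hL) ha h3)]
    omega
  by_cases h4 : 4 * a = 0
  · have h_card : #{a, -a, 2 * a} = 3 := by grind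
    have h_le := hI.two_mul_card_le_of_subset_dstar (U := {a, -a, 2 * a}) (by
      simp only [insert_subset_iff, singleton_subset_iff]
      exact ⟨ha, neg_mem_dstar ha, ha2⟩)
    rw [if_pos (natCast_div_four_mem_dstar (dvd_trans (by norm_num) hL) ha h4 ha2_ne)]
    omega
  · have h_le := hI.eight_le_card_dplus ha ha2 ha2_ne (by grind) (by grind) (by grind)
    omega

theorem NoConsecutive.eight_le_charge (hL : 12 ∣ L) (hI : NoConsecutive (dstar I))
    (h_card : #I = 3) : 8 ≤ charge I := by
  obtain ⟨a, ha, b, hb, hab, ha2, hb2⟩ :=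
    exists_add_mem_dstar_of_card_eq_three (dvd_trans (by norm_num) hL) h_card
  by_cases h_eq : a = b
  · subst h_eq
    exact hI.eight_le_charge_of_two_mul_mem hL ha (by rwa [two_mul])
  · have h_le := hI.eight_le_card_dplus ha hb ha2 hb2 h_eq (ne_zero_of_mem_dstar hab)
    unfold charge
    omega

theorem nine_le_charge_of_consecutive (hL : 12 ∣ L) (h_card : #I = 3) (h1 : 1 ∉ dstar I)
    (ha : a ∈ dstar I) (ha' : a + 1 ∈ dstar I) : 9 ≤ charge I := by
  have h2_dvd : 2 ∣ L := dvd_trans (by norm_num) hL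
  have h3_dvd : 3 ∣ L := dvd_trans (by norm_num) hL
  have h4_dvd : 4 ∣ L := dvd_trans (by norm_num) hL
  have hc := two_mul_add_one_mem_dstar h2_dvd h_card h1 ha ha'
  unfold charge
  by_cases h3 : 3 * a = 0 ∨ 3 * (a + 1) = 0
  · have h_six := six_le_card_dplus_of_consecutive h2_dvd h1 ha ha' hc
    have h_third : ((L / 3 : ℕ) : ZMod L) ∈ dstar I := by
      rcases h3 with h | h
      exacts [natCast_div_three_mem_dstar h3_dvd ha h, natCast_div_three_mem_dstar h3_dvd ha' h]
    rw [if_pos h_third]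
    omega
  · obtain ⟨h3a, h3a'⟩ := not_or.1 h3
    have h_ten := ten_le_card_dplus_of_consecutive h3_dvd h4_dvd h1 ha ha' hc h3a h3a'
    omega

theorem eight_le_charge (hL : 12 ∣ L) (h_card : #I = 3) (h1 : 1 ∉ dstar I) : 8 ≤ charge I := by
  by_cases hI : NoConsecutive (dstar I)
  · exact hI.eight_le_charge hL h_card
  · obtain ⟨a, ha, ha'⟩ : ∃ a ∈ dstar I, a + 1 ∈ dstar I := by simpa [NoConsecutive] using hI
    exact (nine_le_charge_of_consecutive hL h_card h1 ha ha').trans' (by norm_num)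

theorem noConsecutive_of_charge_le_eight (hL : 12 ∣ L) (h_card : #I = 3) (h1 : 1 ∉ dstar I)
    (h_charge : charge I ≤ 8) : NoConsecutive (dstar I) := fun _ ha ha' =>
  absurd (nine_le_charge_of_consecutive hL h_card h1 ha ha') (by omega)

end Charge

section Code

variable {L ω : ℕ} {C : Finset (Finset (ZMod L))}

theorem NoConsecutive.natCast_odd_notMem {D : Finset (ZMod L)} (hD : NoConsecutive D)
    (h1 : 1 ∉ D) (h_cover : ∀ x, x ≠ 0 → x ≠ 1 → x ∈ D ∨ x - 1 ∈ D) {n : ℕ} (hn : Odd n)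
    (hnL : n < L) : (n : ZMod L) ∉ D := by
  obtain ⟨m, rfl⟩ := hn
  induction m with
  | zero => simpa using h1
  | succ m ih =>
    have h_zero : ((2 * m + 2 : ℕ) : ZMod L) ≠ 0 := by
      rw [Ne, ZMod.natCast_eq_zero_iff]
      exact Nat.not_dvd_of_pos_of_lt (by omega) (by omega)
    have h_one : ((2 * m + 2 : ℕ) : ZMod L) ≠ 1 := by
      rw [← Nat.cast_one, Ne, ZMod.natCast_eq_natCast_iff', Nat.mod_eq_of_lt (by omega),
        Nat.mod_eq_of_lt (by omega)]
      omega
    rcases h_cover _ h_zero h_one with h | h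
    · exact_mod_cast hD _ h
    · exact absurd (by push_cast at h ⊢; convert h using 1; ring) (ih (by omega))

theorem IsSCAC.eq_of_mem_dplus (hC : IsSCAC L ω C) {I J : Finset (ZMod L)} {x : ZMod L}
    (hI : I ∈ C) (hJ : J ∈ C) (hxI : x ∈ dplus I) (hxJ : x ∈ dplus J) : I = J := by
  by_contra h_ne
  exact disjoint_left.1 (hC.2.2 I hI J hJ h_ne) hxI hxJ

theorem IsSCAC.sum_ite_mem_dstar_le (hC : IsSCAC L ω C) (x : ZMod L) (w : ℕ) :
    ∑ I ∈ C, (if x ∈ dstar I then w else 0) ≤ if x ∈ C.biUnion dstar then w else 0 := by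
  split_ifs with hx
  · obtain ⟨J, hJ, hxJ⟩ := mem_biUnion.1 hx
    rw [sum_eq_single_of_mem J hJ fun I hI h_ne => if_neg fun hxI => h_ne
      (hC.eq_of_mem_dplus hI hJ (dstar_subset_dplus hxI) (dstar_subset_dplus hxJ)), if_pos hxJ]
  · exact (sum_eq_zero fun I hI => if_neg fun hxI => hx (mem_biUnion.2 ⟨I, hI, hxI⟩)).le

theorem IsSCAC.sum_charge_le (hC : IsSCAC L ω C) :
    ∑ I ∈ C, charge I ≤ #(C.biUnion dplus) + 4 +
      if ((L / 4 : ℕ) : ZMod L) ∈ C.biUnion dstar then 2 else 0 := by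
  have h_third : ∑ I ∈ C, (if ((L / 3 : ℕ) : ZMod L) ∈ dstar I then 4 else 0) ≤ 4 :=
    (hC.sum_ite_mem_dstar_le _ 4).trans (by split_ifs <;> norm_num)
  simp only [charge, sum_add_distrib]
  rw [card_biUnion hC.2.2]
  exact add_le_add (add_le_add_right h_third _) (hC.sum_ite_mem_dstar_le _ 2)

theorem IsSCAC.biUnion_dplus_subset [NeZero L] (hC : IsSCAC L ω C) :
    C.biUnion dplus ⊆ {0, 1}ᶜ :=
  biUnion_subset.2 fun I hI => dplus_subset_compl_zero_one (hC.2.1 I hI).1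

theorem IsSCAC.noConsecutive_biUnion_dstar (hC : IsSCAC L ω C)
    (h_words : ∀ I ∈ C, NoConsecutive (dstar I)) : NoConsecutive (C.biUnion dstar) := by
  intro x hx hx'
  obtain ⟨I, hI, hxI⟩ := mem_biUnion.1 hx
  obtain ⟨J, hJ, hxJ⟩ := mem_biUnion.1 hx'
  obtain rfl := hC.eq_of_mem_dplus hI hJ (add_one_mem_dplus hxI) (dstar_subset_dplus hxJ)
  exact h_words I hI x hxI hxJ

theorem IsSCAC.natCast_odd_notMem_dstar [NeZero L] (hC : IsSCAC L ω C)
    (h_words : ∀ I ∈ C, NoConsecutive (dstar I)) (h_cover : C.biUnion dplus = {0, 1}ᶜ) {n : ℕ}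
    (hn : Odd n) (hnL : n < L) : (n : ZMod L) ∉ C.biUnion dstar := by
  refine (hC.noConsecutive_biUnion_dstar h_words).natCast_odd_notMem ?_ ?_ hn hnL
  · simp only [mem_biUnion, not_exists, not_and]
    exact fun I hI => (hC.2.1 I hI).1
  · intro x hx0 hx1
    have hx : x ∈ C.biUnion dplus := by simp [h_cover, hx0, hx1]
    obtain ⟨I, hI, hxI⟩ := mem_biUnion.1 hx
    exact (mem_dplus.1 hxI).imp (fun h => mem_biUnion.2 ⟨I, hI, h⟩)
      fun h => mem_biUnion.2 ⟨I, hI, h⟩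

theorem IsSCAC.eight_mul_card_lt [NeZero L] (hL : 12 ∣ L) (h_odd : Odd (L / 4))
    (hC : IsSCAC L 3 C) : 8 * #C < L + 4 := by
  have h_pos := NeZero.pos L
  have h_eight : ∀ I ∈ C, 8 ≤ charge I := fun I hI =>
    eight_le_charge hL (hC.1 I hI) (hC.2.1 I hI).1
  have h_lower : ∑ _I ∈ C, 8 ≤ ∑ I ∈ C, charge I := sum_le_sum h_eight
  have h_sum : ∑ _I ∈ C, 8 = 8 * #C := by rw [sum_const, smul_eq_mul, mul_comm]
  have h_upper := hC.sum_charge_le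
  have h_compl := card_compl_zero_one (L := L) (by omega)
  have h_union := card_le_card hC.biUnion_dplus_subset
  by_contra! h_large
  have h_quarter : ((L / 4 : ℕ) : ZMod L) ∈ C.biUnion dstar := by
    by_contra h
    rw [if_neg h] at h_upper
    omega
  rw [if_pos h_quarter] at h_upper
  have h_cover : C.biUnion dplus = {0, 1}ᶜ :=
    eq_of_subset_of_card_le hC.biUnion_dplus_subset (by omega)
  have h_charge : ∀ I ∈ C, 8 = charge I := (sum_eq_sum_iff_of_le h_eight).1 (by omega)
  have h_words : ∀ I ∈ C, NoConsecutive (dstar I) := fun I hI =>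
    noConsecutive_of_charge_le_eight hL (hC.1 I hI) (hC.2.1 I hI).1 (h_charge I hI).ge
  exact hC.natCast_odd_notMem_dstar h_words h_cover h_odd (by omega) h_quarter

end Code

theorem MS_upper_mod24 (L : ℕ) (hL : 18 ≤ L) (hmod : L % 24 = 12) :
    MS L 3 ≤ (L - 4) / 8 := by
  have : NeZero L := ⟨by omega⟩
  have h_odd : Odd (L / 4) := Nat.odd_iff.2 (by omega)
  refine csSup_le' ?_
  rintro n ⟨C, hC, rfl⟩
  have h_lt := hC.eight_mul_card_lt (by omega) h_odd
  omega
end
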